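/- arXiv:2004.05829 — 2 statements merged into one kernel-verified Lean document; each statement's English description precedes it below -/
import Mathlib

section
/- Let S be an n × n real symmetric matrix with all diagonal entries 0 and all off-diagonal entries equal to 1 or -1 (a Seidel matrix). If n is not congruent to 1 modulo 4, then S is nonsingular, i.e., det S ≠ 0. -/
open Matrix

/-!
The determinant of a Seidel matrix is congruent to `1 - n` modulo `4`, which is the exact
determinant of the Seidel matrix `1 - J` of the complete graph, `J` being the all-ones matrix.
Indeed, passing from a symmetric integer matrix `A` to `A + 2E` changes its determinant by
`2 tr(adj(A) E)` modulo `4`, and the trace of a product of two symmetric integer matrices is even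
as soon as one of them has even diagonal, because the off-diagonal terms cancel in pairs modulo `2`.
-/

lemma even_sum_sum_of_symm {ι M : Type*} [AddCommMonoid M] (s : Finset ι) {f : ι → ι → M}
    (hsymm : ∀ i j, f i j = f j i) (hdiag : ∀ i, Even (f i i)) :
    Even (∑ i ∈ s, ∑ j ∈ s, f i j) := by
  classical
  induction s using Finset.induction_on with
  | empty => simp
  | insert a s ha ih =>
    have hsplit : ∑ i ∈ insert a s, ∑ j ∈ insert a s, f i j =
        f a a + (∑ j ∈ s, f a j + ∑ j ∈ s, f a j) + ∑ i ∈ s, ∑ j ∈ s, f i j := by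
      simp only [Finset.sum_insert ha, Finset.sum_add_distrib, hsymm _ a, add_assoc]
    rw [hsplit]
    exact ((hdiag a).add (Even.add_self _)).add ih

section Multilinear

variable {ι R N : Type*} {M : ι → Type*} [DecidableEq ι] [CommSemiring R]

lemma multilinearMap_piecewise_const_smul [∀ i, AddCommMonoid (M i)] [AddCommMonoid N]
    [∀ i, Module R (M i)] [Module R N] (f : MultilinearMap R M N) (c : R) (x h : ∀ i, M i)
    (s : Finset ι) :
    f (s.piecewise (c • h) x) = c ^ s.card • f (s.piecewise h x) := by
  have hpiecewise : s.piecewise (c • h) x =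
      s.piecewise (fun i ↦ c • s.piecewise h x i) (s.piecewise h x) := by
    ext i
    by_cases hi : i ∈ s <;> simp [hi]
  rw [hpiecewise, f.map_piecewise_smul, Finset.prod_const]

lemma exists_multilinearMap_add_smul_eq [Fintype ι] [∀ i, AddCommGroup (M i)] [AddCommGroup N]
    [∀ i, Module R (M i)] [Module R N] (f : MultilinearMap R M N) (c : R) (x h : ∀ i, M i) :
    ∃ r, f (x + c • h) = f x + c • ∑ i, f (Function.update x i (h i)) + c ^ 2 • r := by
  refine ⟨∑ s : Finset ι with 2 ≤ s.card, c ^ (s.card - 2) • f (s.piecewise h x), ?_⟩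
  rw [f.map_add_eq_map_add_linearDeriv_add, map_smul, f.linearDeriv_apply,
    Finset.smul_sum (r := c ^ 2)]
  congr 1
  refine Finset.sum_congr rfl fun s hs ↦ ?_
  rw [multilinearMap_piecewise_const_smul, smul_smul, ← pow_add,
    Nat.add_sub_cancel' (Finset.mem_filter.mp hs).2]

end Multilinear

section Determinant

variable {V R : Type*} [Fintype V]

lemma even_trace_mul_of_isSymm [NonUnitalNonAssocSemiring R] {A E : Matrix V V R}
    (hA : A.IsSymm) (hE : E.IsSymm) (hdiag : ∀ i, Even (E i i)) : Even (A * E).trace := by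
  have htrace : (A * E).trace = ∑ i, ∑ j, A i j * E i j := by
    simp only [trace, diag_apply, mul_apply, hE.apply]
  rw [htrace]
  exact even_sum_sum_of_symm _ (fun i j ↦ by rw [hA.apply, hE.apply])
    fun i ↦ (hdiag i).mul_left _

variable [DecidableEq V] [CommRing R]

lemma sum_det_updateRow_eq_trace_adjugate_mul (A E : Matrix V V R) :
    ∑ i, (A.updateRow i (E i)).det = (A.adjugate * E).trace := by
  have hrow (i : V) : (A.updateRow i (E i)).det = (E * A.adjugate) i i := by
    rw [← cramer_transpose_apply, cramer_eq_adjugate_mulVec, ← adjugate_transpose,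
      mulVec_transpose, mul_apply_eq_vecMul]
  rw [trace_mul_comm]
  exact Finset.sum_congr rfl fun i _ ↦ hrow i

lemma exists_det_add_smul_eq (c : R) (A E : Matrix V V R) :
    ∃ r, det (A + c • E) = det A + c * (A.adjugate * E).trace + c ^ 2 * r := by
  rw [← sum_det_updateRow_eq_trace_adjugate_mul]
  exact exists_multilinearMap_add_smul_eq detRowAlternating.toMultilinearMap c A E

lemma four_dvd_det_add_two_smul_sub_det {A E : Matrix V V R} (hA : A.IsSymm) (hE : E.IsSymm)
    (hdiag : ∀ i, Even (E i i)) : 4 ∣ det (A + (2 : R) • E) - det A := by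
  obtain ⟨t, ht⟩ := (even_trace_mul_of_isSymm hA.adjugate hE hdiag).two_dvd
  obtain ⟨q, hq⟩ := exists_det_add_smul_eq 2 A E
  exact ⟨q + t, by linear_combination hq + 2 * ht⟩

lemma det_one_sub_of_one :
    det (1 - of fun _ _ ↦ 1 : Matrix V V R) = 1 - Fintype.card V := by
  have hrank_one : (1 - of fun _ _ ↦ 1 : Matrix V V R) =
      1 + replicateCol Unit (-1 : V → R) * replicateRow Unit (1 : V → R) := by
    ext i j
    simp [mul_apply, sub_eq_add_neg]
  rw [hrank_one, det_one_add_replicateCol_mul_replicateRow]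
  simp [sub_eq_add_neg]

lemma det_intModEq_four_of_isSymm {A B : Matrix V V ℤ} (hA : A.IsSymm) (hB : B.IsSymm)
    (hdiag : ∀ i, A i i ≡ B i i [ZMOD 4]) (hoff : ∀ i j, i ≠ j → A i j ≡ B i j [ZMOD 2]) :
    A.det ≡ B.det [ZMOD 4] := by
  have hentry (i j : V) : (2 : ℤ) ∣ B i j - A i j := by
    rcases eq_or_ne i j with rfl | hij
    · exact (show (2 : ℤ) ∣ 4 by decide).trans (hdiag i).dvd
    · exact (hoff i j hij).dvd
  choose E hE using hentry
  have hE_symm : (of E).IsSymm := IsSymm.ext fun i j ↦ by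
    have hji := hE j i
    rw [hA.apply, hB.apply, hE i j] at hji
    exact (mul_left_cancel₀ two_ne_zero hji).symm
  have hE_diag (i : V) : Even (E i i) := by
    have h4 := (hdiag i).dvd
    rw [hE i i] at h4
    exact even_iff_two_dvd.mpr (by lia)
  have hB_eq : B = A + (2 : ℤ) • of E := by
    ext i j
    simp [← hE i j]
  rw [Int.modEq_iff_dvd, hB_eq]
  exact four_dvd_det_add_two_smul_sub_det hA hE_symm hE_diag

theorem det_intModEq_one_sub_card {A : Matrix V V ℤ} (hsymm : A.IsSymm) (hdiag : ∀ i, 4 ∣ A i i)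
    (hoff : ∀ i j, i ≠ j → Odd (A i j)) : A.det ≡ 1 - Fintype.card V [ZMOD 4] := by
  rw [← det_one_sub_of_one]
  refine det_intModEq_four_of_isSymm hsymm (IsSymm.ext fun i j ↦ ?_) (fun i ↦ ?_) fun i j hij ↦ ?_
  · simp [one_apply, eq_comm]
  · simpa using (hdiag i).modEq_zero_int
  · have hone_sub : (1 - of fun _ _ ↦ 1 : Matrix V V ℤ) i j = -1 := by simp [hij]
    rw [hone_sub]
    exact Int.odd_iff.mp (hoff i j hij)

theorem seidel_matrix_nonsingular_general [CharZero R] {S : Matrix V V R} (hsymm : S.IsSymm)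
    (hdiag : ∀ i, ∃ k : ℤ, 4 ∣ k ∧ S i i = k)
    (hoff : ∀ i j, i ≠ j → ∃ k : ℤ, Odd k ∧ S i j = k)
    (hcard : Fintype.card V % 4 ≠ 1) : S.det ≠ 0 := by
  have hint (i j : V) :
      ∃ k : ℤ, (i = j → 4 ∣ k) ∧ (i ≠ j → Odd k) ∧ S i j = k := by
    rcases eq_or_ne i j with rfl | hij
    · simpa using hdiag i
    · simpa [hij] using hoff i j hij
  choose A hA_diag hA_off hSA using hint
  have hA_symm : (of A).IsSymm := IsSymm.ext fun i j ↦ by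
    have hcast := hsymm.apply i j
    rw [hSA, hSA] at hcast
    exact_mod_cast hcast
  have hmod : (of A).det ≡ 1 - Fintype.card V [ZMOD 4] :=
    det_intModEq_one_sub_card hA_symm (fun i ↦ hA_diag i i rfl) hA_off
  have hdet : S.det = ((of A).det : R) := by
    rw [Int.cast_det]
    exact congrArg det (Matrix.ext hSA)
  rw [hdet, Int.cast_ne_zero]
  intro hzero
  have := (hzero ▸ hmod).dvd
  lia

end Determinant

/-- A Seidel matrix of order `n` (real symmetric, zero diagonal, off-diagonal entries
`±1`) is nonsingular whenever `n` is not congruent to `1` modulo `4`. -/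
theorem seidel_matrix_nonsingular
    (n : ℕ) (S : Matrix (Fin n) (Fin n) ℝ)
    (hsymm : S.IsSymm)
    (hdiag : ∀ i, S i i = 0)
    (hoff : ∀ i j, i ≠ j → S i j = 1 ∨ S i j = -1)
    (hn : n % 4 ≠ 1) :
    S.det ≠ 0 :=
  seidel_matrix_nonsingular_general hsymm (fun i ↦ ⟨0, by simp [hdiag i]⟩)
    (fun i j hij ↦ (hoff i j hij).elim (fun h ↦ ⟨1, by simp [h]⟩) fun h ↦ ⟨-1, by simp [h]⟩)
    (by simpa using hn)
end

section
/- Let n ≥ 2 and let C be an n × n real symmetric conference matrix (diagonal entries 0, off-diagonal entries ±1, C Cᵀ = (n-1)·I). Write C in block form as C = [[0, vᵀ], [v, S]], where v ∈ ℝ^{n-1} is the first column of C with its first entry removed and S is the principal submatrix of C obtained by deleting the first row and first column. Then S v = 0 and S² x = (n-1) x for every x ∈ ℝ^{n-1} orthogonal to v; consequently the eigenvalues of S are 0 (with multiplicity 1) and ±√(n-1) (each with multiplicity (n-2)/2), so the spectrum of S is symmetric. -/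
open Matrix

/-- The multiplicity of `μ` as an eigenvalue of the matrix `S`:
the dimension of the kernel of `S - μ • 1`. -/
noncomputable def eigMult {n : ℕ} (S : Matrix (Fin n) (Fin n) ℝ) (μ : ℝ) : ℕ :=
  Module.finrank ℝ (LinearMap.ker (Matrix.toLin' (S - μ • (1 : Matrix (Fin n) (Fin n) ℝ))))

/-!
Write `C = [[0, vᵀ], [v, S]]`. Comparing blocks in `C Cᵀ = c • 1` gives `v ⬝ v = c`, `S v = 0` and
`S² = c • 1 - v vᵀ`. Hence `S³ = c S`, so the eigenvalues of `S` lie in `{0, √c, -√c}`, and the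
projections onto the three eigenspaces are the polynomials `1 - S² / c` and `(S² ± √c S) / (2c)`
in `S`. The rank of a projection is its trace, so the multiplicities are determined by `tr S = 0`
and `tr S² = c (n - 1)`.
-/

section CubeProportionalEndomorphism

open Module End

variable {K V : Type*} [Field K] [AddCommGroup V] [Module K V] {f : End K V} {c t μ : K}

lemma isProj_ker_of_pow_three_eq_smul (hc : c ≠ 0) (hf : f ^ 3 = c • f) :
    LinearMap.IsProj (LinearMap.ker f) (1 - c⁻¹ • f ^ 2) where
  map_mem x := by
    have hf_mul : f * (1 - c⁻¹ • f ^ 2) = 0 := by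
      rw [mul_sub, mul_one, mul_smul_comm, ← pow_succ', hf, inv_smul_smul₀ hc, sub_self]
    exact LinearMap.congr_fun hf_mul x
  map_id x hx := by
    have hfx : f x = 0 := hx
    simp [pow_two, hfx]

lemma isProj_eigenspace_of_pow_three_eq_sq_smul [NeZero (2 : K)] (ht : t ≠ 0)
    (hf : f ^ 3 = t ^ 2 • f) :
    LinearMap.IsProj (eigenspace f t) ((2 * t ^ 2)⁻¹ • (f ^ 2 + t • f)) where
  map_mem x := by
    have hf_mul : f * (f ^ 2 + t • f) = t • (f ^ 2 + t • f) := by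
      rw [mul_add, mul_smul_comm, ← pow_succ', ← pow_two, hf, smul_add, smul_smul, ← pow_two,
        add_comm]
    refine Submodule.smul_mem _ _ (mem_eigenspace_iff.mpr ?_)
    exact LinearMap.congr_fun hf_mul x
  map_id x hx := by
    have hfx : f x = t • x := mem_eigenspace_iff.mp hx
    have h2t : 2 * t ^ 2 ≠ 0 := mul_ne_zero two_ne_zero (pow_ne_zero 2 ht)
    calc ((2 * t ^ 2)⁻¹ • (f ^ 2 + t • f)) x
        = (2 * t ^ 2)⁻¹ • (2 * t ^ 2) • x := by
          simp only [LinearMap.smul_apply, LinearMap.add_apply, pow_two, End.mul_apply, hfx,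
            map_smul, smul_smul t t, ← add_smul, two_mul]
      _ = x := inv_smul_smul₀ h2t x

lemma eigenspace_eq_bot_of_pow_three_eq_smul (hf : f ^ 3 = c • f) (hμ : μ ≠ 0) (hμc : μ ^ 2 ≠ c) :
    eigenspace f μ = ⊥ := by
  by_contra hne
  obtain ⟨x, hx⟩ := (hasEigenvalue_iff.mpr hne).exists_hasEigenvector
  have hcube : μ ^ 3 • x = (c * μ) • x := by
    rw [← hx.pow_apply 3, hf, LinearMap.smul_apply, hx.apply_eq_smul, smul_smul]
  have hroot : μ * μ ^ 2 = μ * c := by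
    rw [← pow_succ', mul_comm μ c]
    exact smul_left_injective K hx.2 hcube
  exact hμc (mul_left_cancel₀ hμ hroot)

variable [FiniteDimensional K V]

lemma finrank_ker_of_pow_three_eq_smul (hc : c ≠ 0) (hf : f ^ 3 = c • f) :
    (finrank K (LinearMap.ker f) : K) = finrank K V - c⁻¹ * LinearMap.trace K V (f ^ 2) := by
  rw [← (isProj_ker_of_pow_three_eq_smul hc hf).trace, map_sub, map_smul, LinearMap.trace_one,
    smul_eq_mul]

lemma finrank_eigenspace_of_pow_three_eq_sq_smul [NeZero (2 : K)] (ht : t ≠ 0)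
    (hf : f ^ 3 = t ^ 2 • f) :
    (finrank K (eigenspace f t) : K) =
      (2 * t ^ 2)⁻¹ * (LinearMap.trace K V (f ^ 2) + t * LinearMap.trace K V f) := by
  rw [← (isProj_eigenspace_of_pow_three_eq_sq_smul ht hf).trace, map_smul, map_add, map_smul,
    smul_eq_mul, smul_eq_mul]

lemma finrank_eigenspace_neg_of_pow_three_eq_smul [CharZero K] (hf : f ^ 3 = c • f)
    (htr : LinearMap.trace K V f = 0) (μ : K) :
    finrank K (eigenspace f (-μ)) = finrank K (eigenspace f μ) := by
  rcases eq_or_ne μ 0 with rfl | hμ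
  · rw [neg_zero]
  rcases eq_or_ne (μ ^ 2) c with rfl | hμc
  · have hf_neg : f ^ 3 = (-μ) ^ 2 • f := by rw [hf, neg_sq]
    apply Nat.cast_injective (R := K)
    rw [finrank_eigenspace_of_pow_three_eq_sq_smul hμ hf,
      finrank_eigenspace_of_pow_three_eq_sq_smul (neg_ne_zero.mpr hμ) hf_neg, htr, neg_sq,
      mul_zero, mul_zero]
  · rw [eigenspace_eq_bot_of_pow_three_eq_smul hf hμ hμc,
      eigenspace_eq_bot_of_pow_three_eq_smul hf (neg_ne_zero.mpr hμ) (by rwa [neg_sq])]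

end CubeProportionalEndomorphism

section BlocksOfOrthogonalMatrix

variable {R : Type*} [CommRing R] {n : ℕ} {C : Matrix (Fin (n + 1)) (Fin (n + 1)) R} {c : R}
  {k : Fin (n + 1)}

lemma mul_add_sum_succAbove_of_mul_transpose_eq_smul_one (hC : C * Cᵀ = c • 1)
    (k i j : Fin (n + 1)) :
    C i k * C j k + ∑ l, C i (k.succAbove l) * C j (k.succAbove l) = if i = j then c else 0 := by
  rw [← Fin.sum_univ_succAbove (fun l ↦ C i l * C j l)]
  simpa [mul_apply, one_apply] using congrFun₂ hC i j

lemma row_dotProduct_self_of_mul_transpose_eq_smul_one (hC : C * Cᵀ = c • 1) (hk : C k k = 0) :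
    (fun j ↦ C k (k.succAbove j)) ⬝ᵥ (fun j ↦ C k (k.succAbove j)) = c := by
  simpa [hk, dotProduct] using mul_add_sum_succAbove_of_mul_transpose_eq_smul_one hC k k k

lemma submatrix_mulVec_row_of_mul_transpose_eq_smul_one (hC : C * Cᵀ = c • 1) (hk : C k k = 0) :
    C.submatrix k.succAbove k.succAbove *ᵥ (fun j ↦ C k (k.succAbove j)) = 0 := by
  ext i
  simpa [hk, mulVec, dotProduct] using
    mul_add_sum_succAbove_of_mul_transpose_eq_smul_one hC k (k.succAbove i) k

lemma submatrix_mul_transpose_of_mul_transpose_eq_smul_one (hC : C * Cᵀ = c • 1)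
    (k : Fin (n + 1)) :
    C.submatrix k.succAbove k.succAbove * (C.submatrix k.succAbove k.succAbove)ᵀ =
      c • 1 - vecMulVec (fun i ↦ C (k.succAbove i) k) (fun i ↦ C (k.succAbove i) k) := by
  ext i j
  rw [Matrix.sub_apply, eq_sub_iff_add_eq']
  simpa [mul_apply, vecMulVec_apply, one_apply] using
    mul_add_sum_succAbove_of_mul_transpose_eq_smul_one hC k (k.succAbove i) (k.succAbove j)

end BlocksOfOrthogonalMatrix

section SquareEqScalarSubRankOne

variable {R ι : Type*} [CommRing R] [Fintype ι] [DecidableEq ι] {S : Matrix ι ι R} {v : ι → R}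
  {c : R}

lemma pow_three_eq_smul_of_sq_eq_smul_one_sub_vecMulVec (hSv : S *ᵥ v = 0)
    (hSS : S ^ 2 = c • 1 - vecMulVec v v) : S ^ 3 = c • S := by
  rw [pow_succ', hSS, mul_sub, mul_vecMulVec, hSv, zero_vecMulVec, sub_zero, mul_smul_comm, mul_one]

lemma trace_sq_of_sq_eq_smul_one_sub_vecMulVec (hvv : v ⬝ᵥ v = c)
    (hSS : S ^ 2 = c • 1 - vecMulVec v v) : (S ^ 2).trace = c * (Fintype.card ι - 1) := by
  rw [hSS, trace_sub, trace_smul, trace_one, trace_vecMulVec, hvv, smul_eq_mul, mul_sub, mul_one]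

lemma mulVec_mulVec_of_sq_eq_smul_one_sub_vecMulVec (hSS : S ^ 2 = c • 1 - vecMulVec v v)
    {x : ι → R} (hx : x ⬝ᵥ v = 0) : S *ᵥ (S *ᵥ x) = c • x := by
  rw [mulVec_mulVec, ← pow_two, hSS, sub_mulVec, smul_mulVec, one_mulVec, vecMulVec_mulVec,
    dotProduct_comm, hx, MulOpposite.op_zero, zero_smul, sub_zero]

end SquareEqScalarSubRankOne

section EigMult

open Module End

variable {n : ℕ} {S : Matrix (Fin n) (Fin n) ℝ} {c t : ℝ}

lemma eigMult_eq_finrank_eigenspace (S : Matrix (Fin n) (Fin n) ℝ) (μ : ℝ) :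
    eigMult S μ = finrank ℝ (eigenspace (toLin' S) μ) := by
  rw [eigMult, map_sub, map_smul, toLin'_one, eigenspace_def]
  rfl

lemma toLin'_pow_three_eq_smul {R ι : Type*} [CommRing R] [Fintype ι] [DecidableEq ι]
    {A : Matrix ι ι R} {a : R} (hA : A ^ 3 = a • A) : toLin' A ^ 3 = a • toLin' A := by
  rw [← toLin'_pow, hA, map_smul]

lemma eigMult_zero_of_pow_three_eq_smul (hc : c ≠ 0) (hS : S ^ 3 = c • S)
    (htr : (S ^ 2).trace = c * (n - 1)) : eigMult S 0 = 1 := by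
  have hrank := finrank_ker_of_pow_three_eq_smul hc (toLin'_pow_three_eq_smul hS)
  rw [← toLin'_pow, trace_toLin'_eq, htr, inv_mul_cancel_left₀ hc, finrank_fin_fun,
    sub_sub_cancel] at hrank
  rw [eigMult_eq_finrank_eigenspace, eigenspace_zero]
  exact_mod_cast hrank

lemma two_mul_eigMult_add_one_of_pow_three_eq_sq_smul (ht : t ≠ 0) (hS : S ^ 3 = t ^ 2 • S)
    (htr : S.trace = 0) (htr_sq : (S ^ 2).trace = t ^ 2 * (n - 1)) :
    2 * eigMult S t + 1 = n := by
  have hrank := finrank_eigenspace_of_pow_three_eq_sq_smul ht (toLin'_pow_three_eq_smul hS)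
  rw [← toLin'_pow, trace_toLin'_eq, trace_toLin'_eq, htr, htr_sq,
    ← eigMult_eq_finrank_eigenspace] at hrank
  have hcast : (2 * eigMult S t + 1 : ℝ) = n := by
    rw [hrank]
    field_simp
    ring
  exact_mod_cast hcast

lemma eigMult_neg_of_pow_three_eq_smul (hS : S ^ 3 = c • S) (htr : S.trace = 0) (μ : ℝ) :
    eigMult S (-μ) = eigMult S μ := by
  rw [eigMult_eq_finrank_eigenspace, eigMult_eq_finrank_eigenspace]
  exact finrank_eigenspace_neg_of_pow_three_eq_smul (toLin'_pow_three_eq_smul hS)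
    (by rw [trace_toLin'_eq, htr]) μ

end EigMult

theorem principal_submatrix_of_conference_matrix_symmetric_spectrum_general
    {n : ℕ} {c : ℝ} (hc : 0 < c) {C : Matrix (Fin (n + 1)) (Fin (n + 1)) ℝ} (hsymm : C.IsSymm)
    (hdiag : ∀ i, C i i = 0) (hC : C * Cᵀ = c • 1) (k : Fin (n + 1))
    {v : Fin n → ℝ} (hv : ∀ i, v i = C (k.succAbove i) k)
    {S : Matrix (Fin n) (Fin n) ℝ} (hS : S = C.submatrix k.succAbove k.succAbove) :
    S *ᵥ v = 0 ∧
    (∀ x : Fin n → ℝ, x ⬝ᵥ v = 0 → S *ᵥ (S *ᵥ x) = c • x) ∧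
    eigMult S 0 = 1 ∧
    eigMult S (√c) = (n - 1) / 2 ∧
    eigMult S (-√c) = (n - 1) / 2 ∧
    ∀ μ : ℝ, eigMult S μ = eigMult S (-μ) := by
  have hcol : v = fun i ↦ C (k.succAbove i) k := funext hv
  have hrow : v = fun i ↦ C k (k.succAbove i) := hcol.trans (funext fun i ↦ hsymm.apply _ _)
  have hSsymm : Sᵀ = S := hS ▸ hsymm.submatrix _
  have hvv : v ⬝ᵥ v = c := hrow ▸ row_dotProduct_self_of_mul_transpose_eq_smul_one hC (hdiag k)
  have hSv : S *ᵥ v = 0 := by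
    rw [hS, hrow, submatrix_mulVec_row_of_mul_transpose_eq_smul_one hC (hdiag k)]
  have hSS : S ^ 2 = c • 1 - vecMulVec v v := by
    rw [pow_two]
    nth_rw 2 [← hSsymm]
    rw [hS, hcol, submatrix_mul_transpose_of_mul_transpose_eq_smul_one hC k]
  have hScube : S ^ 3 = c • S := pow_three_eq_smul_of_sq_eq_smul_one_sub_vecMulVec hSv hSS
  have htr : S.trace = 0 := by simp [hS, trace, hdiag]
  have htr_sq : (S ^ 2).trace = c * (n - 1) := by
    simpa using trace_sq_of_sq_eq_smul_one_sub_vecMulVec hvv hSS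
  have hneg := eigMult_neg_of_pow_three_eq_smul hScube htr
  have hsqrt : 2 * eigMult S (√c) + 1 = n :=
    two_mul_eigMult_add_one_of_pow_three_eq_sq_smul (Real.sqrt_pos.mpr hc).ne'
      (by rwa [Real.sq_sqrt hc.le]) htr (by rwa [Real.sq_sqrt hc.le])
  refine ⟨hSv, fun x hx ↦ mulVec_mulVec_of_sq_eq_smul_one_sub_vecMulVec hSS hx,
    eigMult_zero_of_pow_three_eq_smul hc.ne' hScube htr_sq, by lia, ?_, fun μ ↦ (hneg μ).symm⟩
  rw [hneg]
  lia

/-- Let `C` be a symmetric conference matrix of order `n + 1 ≥ 2` (so `C * Cᵀ = n • 1`).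
Write `C` in block form `C = [[0, vᵀ], [v, S]]`, where `v` is the first column of `C`
with its first entry removed and `S` is the principal submatrix obtained by deleting the
first row and column. Then `S v = 0`, `S² x = n • x` for every `x ⊥ v`, the eigenvalues
of `S` are `0` (multiplicity `1`) and `±√n` (each with multiplicity `(n-1)/2`,
i.e. `((n+1)-2)/2`), and hence the spectrum of `S` is symmetric. -/
theorem principal_submatrix_of_conference_matrix_symmetric_spectrum
    (n : ℕ) (hn : 1 ≤ n) (C : Matrix (Fin (n + 1)) (Fin (n + 1)) ℝ)
    (hsymm : C.IsSymm)
    (hdiag : ∀ i, C i i = 0)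
    (hoff : ∀ i j, i ≠ j → C i j = 1 ∨ C i j = -1)
    (hconf : C * Cᵀ = (n : ℝ) • (1 : Matrix (Fin (n + 1)) (Fin (n + 1)) ℝ))
    (v : Fin n → ℝ) (hv : ∀ i, v i = C i.succ 0)
    (S : Matrix (Fin n) (Fin n) ℝ) (hS : S = C.submatrix Fin.succ Fin.succ) :
    S.mulVec v = 0 ∧
    (∀ x : Fin n → ℝ, x ⬝ᵥ v = 0 → S.mulVec (S.mulVec x) = (n : ℝ) • x) ∧
    eigMult S 0 = 1 ∧
    eigMult S (Real.sqrt (n : ℝ)) = (n - 1) / 2 ∧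
    eigMult S (-Real.sqrt (n : ℝ)) = (n - 1) / 2 ∧
    (∀ μ : ℝ, eigMult S μ = eigMult S (-μ)) := by
  exact principal_submatrix_of_conference_matrix_symmetric_spectrum_general
    (Nat.cast_pos.mpr hn) hsymm hdiag hconf 0 hv hS
end
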